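/- Let 𝒴 ⊆ 𝒳 be an exact cover of U and let X_i ∈ 𝒴. Let D be the realization of Π with respect to 𝒴 and let D' be the realization of Π with respect to 𝒴 ∖ {X_i}. Then for each j ∈ {1,2,3}, the level (depth) of the query node q_{s_{ij}} in D minus its level in D' equals γ(i,j). -/

import Mathlib

/-! In a realization every entry of `Π` contributes a piece of the left path whose length is `5`
for a set (`r_i` or `t_i`, then four `a`-leaves) and the number of pending leaves for an element.
Hence the level of the query `q_{s_{ij}}` is the total length of the pieces of all entries
above the one hosting it (its *host*), plus its level inside the piece of the host
(`qdepths_of_host`); since `Π` is sorted, this total is a sum over all entries larger than the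
host (`sum_prefix`).

In `D` the host is the element `u_{ij}`, and every element contributes exactly one node because
`𝒴` is an exact cover. In `D'` the host is `X_i` itself, the query has level `5 − j` inside
`D^A_i` (`j ∈ {1,2,3}`), and every element above `X_i` still contributes one node, because all
elements of `X_i` precede `X_i` in `≺`. Subtracting, the entries above `X_i` cancel and the
entries between `u_{ij}` and `X_i` remain. -/

open scoped Classical
/-- Ordered binary trees, every node carrying a label (assignment). `nil` is the empty tree. -/
inductive BT (α : Type) where
  | nil : BT α
  | node (a : α) (l r : BT α) : BT α
  deriving DecidableEq

namespace BT

variable {α : Type}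

/-- Labels of the leaves (nodes with no children), from left to right. -/
def leafList : BT α → List α
  | .nil => []
  | .node a .nil .nil => [a]
  | .node _ l r => l.leafList ++ r.leafList

/-- Labels of all nodes. -/
def vals : BT α → List α
  | .nil => []
  | .node a l r => a :: (l.vals ++ r.vals)

/-- Leaf labels together with the depth (number of edges from the root) of the leaf. -/
def leafDepths : BT α → List (α × ℕ)
  | .nil => []
  | .node a .nil .nil => [(a, 0)]
  | .node _ l r => (l.leafDepths ++ r.leafDepths).map (fun p => (p.1, p.2 + 1))

/-- Height of a binary tree, in edges. -/
def height : BT α → ℕ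
  | .nil => 0
  | .node _ .nil .nil => 0
  | .node _ l r => max l.height r.height + 1

/-- Label of the root. -/
def rootVal : BT α → Option α
  | .nil => none
  | .node a _ _ => some a

/-- The labels of the nodes on the path from the root to the (leftmost) leaf labelled `x`. -/
def pathTo [DecidableEq α] : BT α → α → List α
  | .nil, _ => []
  | .node a l r, x => a :: (if x ∈ r.leafList then r.pathTo x else l.pathTo x)

/-- The depth (number of edges) of the leaf labelled `x`. -/
def depthOf [DecidableEq α] (D : BT α) (x : α) : ℕ := (D.pathTo x).length - 1

/-- The search-tree property w.r.t. a descendance relation `desc` (`desc u v` meaning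
`v` lies in the subtree of the input tree rooted at `u`): everything in the right subtree
of a node labelled `a` is in the subtree of `a`, everything in the left subtree is not. -/
def SearchProp (desc : α → α → Prop) : BT α → Prop
  | .nil => True
  | .node a l r =>
      (∀ b ∈ r.vals, desc a b) ∧ (∀ b ∈ l.vals, ¬ desc a b) ∧
        SearchProp desc l ∧ SearchProp desc r

/-- Cost (expected number of queries, unnormalized) of a search tree. -/
def cost (w : α → ℕ) (D : BT α) : ℕ := (D.leafDepths.map (fun p => p.2 * w p.1)).sum

/-- Total weight of the leaves of a search (sub)tree. -/
def leafWeight (w : α → ℕ) (D : BT α) : ℕ := (D.leafList.map w).sum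

/-- All subtrees of a binary tree together with their depth. -/
def subtreesD : BT α → List (BT α × ℕ)
  | .nil => []
  | .node a l r =>
      (BT.node a l r, 0) :: (l.subtreesD ++ r.subtreesD).map (fun p => (p.1, p.2 + 1))

end BT


namespace X3C

/-- Strict lexicographic order on triples of naturals. -/
def keyLt (p q : ℕ × ℕ × ℕ) : Prop :=
  p.1 < q.1 ∨ (p.1 = q.1 ∧ (p.2.1 < q.2.1 ∨ (p.2.1 = q.2.1 ∧ p.2.2 < q.2.2)))

/-- An instance of 3-bounded Exact 3-Set Cover, with the ground set `U = {0,…,n−1}`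
(ordered naturally) and the sets `X_0 ≺ ⋯ ≺ X_{m−1}` already sorted according to the
order `≺`.  `x i 0 < x i 1 < x i 2` are the three elements of `X_i`. -/
structure Inst where
  n : ℕ
  m : ℕ
  k : ℕ
  hn : n = 3 * k
  hk : 1 ≤ k
  x : Fin m → Fin 3 → ℕ
  hord : ∀ i, x i 0 < x i 1 ∧ x i 1 < x i 2
  hbound : ∀ i, x i 2 < n
  hmult : ∀ u : ℕ, u < n →
    (Finset.univ.filter (fun i : Fin m => ∃ j : Fin 3, x i j = u)).card ≤ 3
  hsorted : ∀ i j : Fin m, i < j →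
    keyLt (x i 2, x i 1, x i 0) (x j 2, x j 1, x j 0)

/-- The key of the element `u_j`: the triple `(u_j, u_1, u_1)`, i.e. `(j, 0, 0)`. -/
def keyU (j : ℕ) : ℕ × ℕ × ℕ := (j, 0, 0)

namespace Inst

variable (I : Inst)

/-- The key of the set `X_i`: the triple `(x_3, x_2, x_1)` of its elements in decreasing
order; sets and elements are compared by the lexicographic order on their keys. -/
def keyX (i : Fin I.m) : ℕ × ℕ × ℕ := (I.x i 2, I.x i 1, I.x i 0)


/-- Number of elements `u_κ` with `u_{x i j} ≺ u_κ ≺ X_i`. -/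
noncomputable def elemsBetween (i : Fin I.m) (j : Fin 3) : ℕ :=
  (Finset.univ.filter
    (fun κ : Fin I.n => I.x i j < (κ : ℕ) ∧ keyLt (keyU κ) (I.keyX i))).card

/-- Number of sets `X_κ` with `u_{x i j} ≺ X_κ ⪯ X_i`. -/
noncomputable def setsBetween (i : Fin I.m) (j : Fin 3) : ℕ :=
  (Finset.univ.filter
    (fun κ : Fin I.m =>
      keyLt (keyU (I.x i j)) (I.keyX κ) ∧ ¬ keyLt (I.keyX i) (I.keyX κ))).card

/-- `γ(i,j) = j − 5 + |{u_κ : u_{ij} ≺ u_κ ≺ X_i}| + 5·|{X_κ : u_{ij} ≺ X_κ ⪯ X_i}|`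
(here `j ∈ {0,1,2}` encodes the index `j+1 ∈ {1,2,3}` of the paper). -/
noncomputable def gam (i : Fin I.m) (j : Fin 3) : ℤ :=
  ((j : ℤ) + 1) - 5 + (I.elemsBetween i j : ℤ) + 5 * (I.setsBetween i j : ℤ)

/-- `|T|`, the number of nodes of the reduction tree `T`
(one root, and for each set: `r_i`, `t_i`, three `s`-leaves and four `a`-leaves). -/
def Tsize : ℕ := 1 + 9 * I.m

/-- `W_{u_j}` as a function of a given weight assignment `f` on the elements:
`Σ_{ℓ : X_ℓ ≺ u_j} w(X̃_ℓ)`, where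
`w(X̃_ℓ) = w(t_ℓ) + w(u_{ℓ1}) + w(u_{ℓ2}) + w(u_{ℓ3}) + 4·w(a_{ℓ1})`,
`w(a_{ℓ1}) = W_{u_{ℓ1}} + W_{u_{ℓ2}} + W_{u_{ℓ3}} + Σ_κ γ(ℓ,κ)·w(u_{ℓκ})` and
`w(t_ℓ) = w(a_{ℓ1}) + w(X_ℓ)/2`. -/
noncomputable def WuF (f : ℕ → ℚ) : ℕ → ℚ := fun j =>
  Nat.strongRecOn j (fun j ih =>
    ∑ ℓ ∈ Finset.univ.filter (fun ℓ : Fin I.m => keyLt (I.keyX ℓ) (keyU j)),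
      (let Wparts : ℚ :=
        ∑ κ : Fin 3, (if h : I.x ℓ κ < j then ih (I.x ℓ κ) h else 0)
       let wa : ℚ := Wparts + ∑ κ : Fin 3, (I.gam ℓ κ : ℚ) * f (I.x ℓ κ)
       let wX : ℚ := f (I.x ℓ 0) + f (I.x ℓ 1) + f (I.x ℓ 2)
       (wa + wX / 2) + wX + 4 * wa))

/-- The weight `w(u_j)` of the element `u_j`, defined by processing `Π` in increasing
order: `w(u_1) = 1` and `w(u_j) = 1 + 6·max{|T|³·w(u_{j−1}), W_{u_j}}`. -/
noncomputable def wu : ℕ → ℚ := fun j =>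
  Nat.strongRecOn j (fun j ih =>
    if j = 0 then 1
    else
      let f : ℕ → ℚ := fun j' => if h : j' < j then ih j' h else 0
      1 + 6 * max ((I.Tsize : ℚ) ^ 3 * f (j - 1)) (I.WuF f j))

/-- `W_{u_j} = Σ_{ℓ : X_ℓ ≺ u_j} w(X̃_ℓ)`. -/
noncomputable def Wu (j : ℕ) : ℚ := I.WuF I.wu j

/-- The common weight `w(a_{i1}) = ⋯ = w(a_{i4})` of the `a`-leaves of `X̃_i`. -/
noncomputable def wa (i : Fin I.m) : ℚ :=
  I.Wu (I.x i 0) + I.Wu (I.x i 1) + I.Wu (I.x i 2) +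
    ∑ κ : Fin 3, (I.gam i κ : ℚ) * I.wu (I.x i κ)

/-- `w(X_i) = w(u_{i1}) + w(u_{i2}) + w(u_{i3})`. -/
noncomputable def wX (i : Fin I.m) : ℚ :=
  I.wu (I.x i 0) + I.wu (I.x i 1) + I.wu (I.x i 2)

/-- `w(t_i) = w(a_{i1}) + w(X_i)/2`. -/
noncomputable def wt (i : Fin I.m) : ℚ := I.wa i + I.wX i / 2

/-- `𝒴` (a set of indices of members of `𝒳`) is an exact cover of `U`. -/
def ExactCover (Y : Finset (Fin I.m)) : Prop :=
  ∀ j : Fin I.n, ∃! i : Fin I.m, i ∈ Y ∧ ∃ κ : Fin 3, I.x i κ = (j : ℕ)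

end Inst

end X3C

namespace X3C

/-- Elements of `U ∪ 𝒳`: `inl j` is the element `u_j`, `inr i` is the set `X_i`. -/
abbrev Elt (I : Inst) := Sum (Fin I.n) (Fin I.m)

namespace Inst

variable (I : Inst)

/-- The key of an element of `U ∪ 𝒳`. -/
def keyE : Elt I → ℕ × ℕ × ℕ
  | .inl j => keyU (j : ℕ)
  | .inr i => I.keyX i

/-- The sequence `Π`: all elements of `U ∪ 𝒳` sorted increasingly w.r.t. `≺`. -/
noncomputable def PiList : List (Elt I) :=
  (((List.finRange I.n).map Sum.inl) ++ ((List.finRange I.m).map Sum.inr)).mergeSort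
    (fun e e' => decide (¬ keyLt (I.keyE e') (I.keyE e)))

/-- `Π` in decreasing order. -/
noncomputable def PiRev : List (Elt I) := I.PiList.reverse

end Inst

end X3C

namespace X3C

/-- The nodes of the reduction tree `T`: the root `r`, and for each set `X_i` the node
`r_i`, the leaf `t_i`, the leaves `s_{i1}, s_{i2}, s_{i3}` (associated with the elements
`u_{i1} < u_{i2} < u_{i3}` of `X_i`) and the leaves `a_{i1},…,a_{i4}`. -/
inductive TN (m : ℕ) where
  | root : TN m
  | rnode (i : Fin m) : TN m
  | tleaf (i : Fin m) : TN m
  | sleaf (i : Fin m) (j : Fin 3) : TN m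
  | aleaf (i : Fin m) (k : Fin 4) : TN m
  deriving DecidableEq

/-- Ancestor relation of the reduction tree `T`: `r_i` is the parent of `t_i` and of the
`s`-leaves; everything else hangs directly below the root. -/
def TNanc {m : ℕ} : TN m → TN m → Prop
  | .root, _ => True
  | .rnode i, y => y = TN.rnode i ∨ y = TN.tleaf i ∨ ∃ j, y = TN.sleaf i j
  | x, y => x = y

namespace Inst

variable (I : Inst)

/-- The weight function of the reduction instance `(T,w)` (internal nodes get weight 0). -/
noncomputable def wTN : TN I.m → ℚ
  | .root => 0
  | .rnode _ => 0
  | .tleaf i => I.wt i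
  | .sleaf i j => I.wu (I.x i j)
  | .aleaf i _ => I.wa i

end Inst

/-- `D` is a search tree for the reduction tree `T`. -/
def IsSearchTreeTN {m : ℕ} (D : BT (TN m)) : Prop :=
  (∀ v : TN m, D.leafList.count v = 1) ∧ BT.SearchProp TNanc D

/-- Cost of a search tree with rational weights. -/
def costQ {α : Type} (w : α → ℚ) (D : BT α) : ℚ :=
  (D.leafDepths.map (fun p => (p.2 : ℚ) * w p.1)).sum

/-- `D` is an optimal search tree for the reduction instance `(T,w)`. -/
noncomputable def Inst.IsOptimalTN (I : Inst) (D : BT (TN I.m)) : Prop :=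
  IsSearchTreeTN D ∧
    ∀ D' : BT (TN I.m), IsSearchTreeTN D' → costQ I.wTN D ≤ costQ I.wTN D'

/-- The sequential search tree asking about the nodes of `L` one after another
(each query has the corresponding leaf as right child), continued by `C`. -/
def seqT {α : Type} (L : List α) (C : BT α) : BT α :=
  L.foldr (fun v acc => BT.node v acc (BT.node v BT.nil BT.nil)) C

namespace Inst

variable (I : Inst)

/-- The leaves associated with the element `u_j` that are *not* queried in the
realization of the later part of `Π`, namely the leaves `s_{ℓκ}` with `u_{ℓκ} = u_j` for
the sets `X_ℓ ∈ 𝒴` (those in `B`-configuration). -/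
noncomputable def pending (Y : Finset (Fin I.m)) (j : Fin I.n) : List (TN I.m) :=
  ((Finset.univ.filter
      (fun p : Fin I.m × Fin 3 => p.1 ∈ Y ∧ I.x p.1 p.2 = (j : ℕ))).toList).map
    (fun p => TN.sleaf p.1 p.2)

/-- `IsReal I Y C L D`: `D` is obtained by processing the (decreasing) list `L` of
elements of `U ∪ 𝒳` as in the definition of a realization of `Π` w.r.t. `𝒴`, with
bottom part (completion) `C`.  A set `X_i ∉ 𝒴` contributes its `A`-configuration `D^A_i`
(root `q_{r_i}`, right subtree the sequential search tree for `t_i,s_{i3},s_{i2},s_{i1}`,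
left subtree a sequential search tree for a permutation of `a_{i1},…,a_{i4}`); a set
`X_i ∈ 𝒴` contributes its `B`-configuration `D^B_i` (root `q_{t_i}`, left subtree a
sequential search tree for a permutation of the `a`-leaves); an element `u_j` contributes
a sequential search tree for (a permutation of) its pending leaves. -/
inductive IsReal (Y : Finset (Fin I.m)) (C : BT (TN I.m)) :
    List (Elt I) → BT (TN I.m) → Prop
  | nil : IsReal Y C [] C
  | setA (i : Fin I.m) (rest : List (Elt I)) (D : BT (TN I.m)) (La : List (TN I.m))
      (hi : i ∉ Y)
      (hLa : La.Perm [TN.aleaf i 0, TN.aleaf i 1, TN.aleaf i 2, TN.aleaf i 3])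
      (h : IsReal Y C rest D) :
      IsReal Y C (Sum.inr i :: rest)
        (BT.node (TN.rnode i) (seqT La D)
          (seqT [TN.tleaf i, TN.sleaf i 2, TN.sleaf i 1, TN.sleaf i 0]
            (BT.node (TN.rnode i) BT.nil BT.nil)))
  | setB (i : Fin I.m) (rest : List (Elt I)) (D : BT (TN I.m)) (La : List (TN I.m))
      (hi : i ∈ Y)
      (hLa : La.Perm [TN.aleaf i 0, TN.aleaf i 1, TN.aleaf i 2, TN.aleaf i 3])
      (h : IsReal Y C rest D) :
      IsReal Y C (Sum.inr i :: rest)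
        (BT.node (TN.tleaf i) (seqT La D) (BT.node (TN.tleaf i) BT.nil BT.nil))
  | elem (j : Fin I.n) (rest : List (Elt I)) (D : BT (TN I.m)) (L : List (TN I.m))
      (hL : L.Perm (I.pending Y j))
      (h : IsReal Y C rest D) :
      IsReal Y C (Sum.inl j :: rest) (seqT L D)

/-- `D` is a realization of `Π` w.r.t. `𝒴` (for some bottom completion `C` taking care
of the remaining zero-weight nodes). -/
noncomputable def IsRealization (Y : Finset (Fin I.m)) (D : BT (TN I.m)) : Prop :=
  ∃ C : BT (TN I.m), I.IsReal Y C I.PiRev D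

end Inst

end X3C

namespace BT

/-- The depths (levels) of all internal nodes labelled `v`. -/
def qdepths {α : Type} [DecidableEq α] : BT α → α → List ℕ
  | .nil, _ => []
  | .node a l r, v =>
      (if a = v ∧ ¬(l = BT.nil ∧ r = BT.nil) then [0] else []) ++
        ((l.qdepths v ++ r.qdepths v).map (· + 1))

end BT

/-! ### The order on keys -/

namespace X3C

theorem keyLt_trans {p q r : ℕ × ℕ × ℕ} (h : keyLt p q) (h' : keyLt q r) : keyLt p r := by
  unfold keyLt at *; omega

theorem keyLt_irrefl (p : ℕ × ℕ × ℕ) : ¬ keyLt p p := by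
  unfold keyLt; omega

theorem keyLt_trichotomy (p q : ℕ × ℕ × ℕ) : keyLt p q ∨ p = q ∨ keyLt q p := by
  obtain ⟨a, b, c⟩ := p
  obtain ⟨a', b', c'⟩ := q
  simp only [keyLt, Prod.mk.injEq]; omega

theorem keyLt_keyU {a b : ℕ} : keyLt (keyU a) (keyU b) ↔ a < b := by
  simp [keyLt, keyU]

/-! ### Levels of queries in sequential search trees -/

section Levels

variable {α : Type} [DecidableEq α]

theorem qdepths_leaf (a v : α) : (BT.node a BT.nil BT.nil).qdepths v = [] := by
  simp [BT.qdepths]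

theorem qdepths_of_notMem (D : BT α) (v : α) (h : v ∉ D.vals) : D.qdepths v = [] := by
  induction D with
  | nil => rfl
  | node a l r ihl ihr =>
    simp only [BT.vals, List.mem_cons, List.mem_append, not_or] at h
    simp [BT.qdepths, ihl h.2.1, ihr h.2.2, Ne.symm h.1]

theorem qdepths_seqT (L : List α) (C : BT α) (v : α) (h : v ∉ L) :
    (seqT L C).qdepths v = (C.qdepths v).map (· + L.length) := by
  induction L with
  | nil => simp [seqT]
  | cons a L ih =>
    simp only [List.mem_cons, not_or] at h
    have := ih h.2
    simp only [seqT, List.foldr_cons] at this ⊢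
    rw [BT.qdepths, this, qdepths_leaf]
    simp [Ne.symm h.1, Function.comp_def, add_assoc]

end Levels

/-! ### Pieces of a realization and hosts -/

namespace Inst

variable (I : Inst)

/-- The number of nodes which an entry of `Π` contributes to the left path. -/
noncomputable def pieceLen (Y : Finset (Fin I.m)) : Elt I → ℕ
  | .inl j => (I.pending Y j).length
  | .inr _ => 5

/-- The entry `e` of `Π` is a host of the leaf `s_{ij}` if its piece of the realization with
respect to `𝒴` contains the query of `s_{ij}`. -/
def Hosts (Y : Finset (Fin I.m)) (i : Fin I.m) (j : Fin 3) : Elt I → Prop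
  | .inl u => i ∈ Y ∧ I.x i j = u
  | .inr l => l = i ∧ i ∉ Y

variable {I}

theorem mem_pending {Y : Finset (Fin I.m)} {u : Fin I.n} {i : Fin I.m} {j : Fin 3} :
    TN.sleaf i j ∈ I.pending Y u ↔ i ∈ Y ∧ I.x i j = u := by
  simp [pending]

theorem sleaf_notMem_aleaves {La : List (TN I.m)} {l : Fin I.m} (i : Fin I.m) (j : Fin 3)
    (hLa : La.Perm [TN.aleaf l 0, TN.aleaf l 1, TN.aleaf l 2, TN.aleaf l 3]) :
    TN.sleaf i j ∉ La := by
  simp [hLa.mem_iff]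

/-- An entry which is not a host shifts all levels of `s_{ij}` by the length of its piece. -/
theorem qdepths_step {Y : Finset (Fin I.m)} {C D : BT (TN I.m)} {e : Elt I} {R : List (Elt I)}
    {i : Fin I.m} {j : Fin 3} (h : I.IsReal Y C (e :: R) D) (he : ¬ I.Hosts Y i j e) :
    ∃ D₀, I.IsReal Y C R D₀ ∧
      D.qdepths (TN.sleaf i j) = (D₀.qdepths (TN.sleaf i j)).map (· + I.pieceLen Y e) := by
  cases h with
  | setA l _ D₀ La hl hLa h =>
    refine ⟨D₀, h, ?_⟩
    have hli : i ≠ l := by rintro rfl; exact he ⟨rfl, hl⟩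
    rw [BT.qdepths, qdepths_seqT La _ _ (sleaf_notMem_aleaves i j hLa),
      qdepths_seqT _ _ _ (by simp [hli]), qdepths_leaf, hLa.length_eq]
    simp [pieceLen]
  | setB l _ D₀ La hl hLa h =>
    refine ⟨D₀, h, ?_⟩
    rw [BT.qdepths, qdepths_seqT La _ _ (sleaf_notMem_aleaves i j hLa), qdepths_leaf,
      hLa.length_eq]
    simp [pieceLen]
  | elem u _ D₀ L hL h =>
    refine ⟨D₀, h, ?_⟩
    rw [qdepths_seqT L _ _ (by rw [hL.mem_iff, mem_pending]; exact he), hL.length_eq]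
    rfl

theorem qdepths_eq_nil {Y : Finset (Fin I.m)} {C D : BT (TN I.m)} {R : List (Elt I)}
    {i : Fin I.m} {j : Fin 3} (hC : TN.sleaf i j ∉ C.vals) (h : I.IsReal Y C R D)
    (hR : ∀ e ∈ R, ¬ I.Hosts Y i j e) : D.qdepths (TN.sleaf i j) = [] := by
  induction R generalizing D with
  | nil => cases h; exact qdepths_of_notMem _ _ hC
  | cons e R ih =>
    obtain ⟨D₀, h₀, hq⟩ := qdepths_step h (hR e (by simp))
    rw [hq, ih h₀ fun e' he' => hR e' (by simp [he'])]; rfl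

theorem qdepths_prefix {Y : Finset (Fin I.m)} {C D : BT (TN I.m)} {P R : List (Elt I)}
    {i : Fin I.m} {j : Fin 3} (h : I.IsReal Y C (P ++ R) D)
    (hP : ∀ e ∈ P, ¬ I.Hosts Y i j e) :
    ∃ D₀, I.IsReal Y C R D₀ ∧ D.qdepths (TN.sleaf i j) =
      (D₀.qdepths (TN.sleaf i j)).map (· + (P.map (I.pieceLen Y)).sum) := by
  induction P generalizing D with
  | nil => exact ⟨D, h, by simp⟩
  | cons e P ih =>
    obtain ⟨D₁, h₁, hq₁⟩ := qdepths_step h (hP e (by simp))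
    obtain ⟨D₀, h₀, hq₀⟩ := ih h₁ fun e' he' => hP e' (by simp [he'])
    refine ⟨D₀, h₀, ?_⟩
    rw [hq₁, hq₀]
    simp [Function.comp_def, add_assoc, add_comm]

/-! ### The order of the entries of `Π` -/

variable (I) in
/-- Distinct entries of `Π` are comparable, so `Π` has no ties. -/
theorem keyE_injective : Function.Injective I.keyE := by
  have hx (l : Fin I.m) : 0 < I.x l 1 := (Nat.zero_le _).trans_lt (I.hord l).1
  rintro (a | a) (b | b) h
  · simpa [keyE, keyU, Fin.ext_iff] using h
  · simp only [keyE, keyU, keyX, Prod.mk.injEq] at h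
    have := hx b; omega
  · simp only [keyE, keyU, keyX, Prod.mk.injEq] at h
    have := hx a; omega
  · rcases lt_trichotomy a b with hab | rfl | hab
    · have := I.hsorted a b hab
      simp only [keyE, keyX] at h
      rw [h] at this; exact absurd this (keyLt_irrefl _)
    · rfl
    · have := I.hsorted b a hab
      simp only [keyE, keyX] at h
      rw [h] at this; exact absurd this (keyLt_irrefl _)

variable (I) in
theorem mem_PiRev (e : Elt I) : e ∈ I.PiRev := by
  rw [PiRev, List.mem_reverse, PiList, (List.mergeSort_perm _ _).mem_iff]
  rcases e with e | e <;> simp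

variable (I) in
theorem nodup_PiRev : I.PiRev.Nodup := by
  rw [PiRev, List.nodup_reverse, PiList, (List.mergeSort_perm _ _).nodup_iff,
    List.nodup_append]
  refine ⟨(List.nodup_finRange _).map Sum.inl_injective,
    (List.nodup_finRange _).map Sum.inr_injective, ?_⟩
  simp

variable (I) in
theorem pairwise_PiRev :
    I.PiRev.Pairwise fun e e' => keyLt (I.keyE e') (I.keyE e) := by
  have h : I.PiRev.Pairwise fun e e' => ¬ keyLt (I.keyE e) (I.keyE e') := by
    rw [PiRev, List.pairwise_reverse, PiList]
    refine (List.pairwise_mergeSort (le := fun e e' => decide (¬ keyLt (I.keyE e') (I.keyE e)))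
      ?_ ?_ _).imp (by simp)
    · intro a b c hab hbc
      simp only [decide_eq_true_eq] at *
      unfold keyLt at *; omega
    · intro a b
      simp only [Bool.or_eq_true, decide_eq_true_eq]
      unfold keyLt; omega
  refine (h.and I.nodup_PiRev).imp ?_
  rintro a b ⟨hab, hne⟩
  rcases keyLt_trichotomy (I.keyE a) (I.keyE b) with h | h | h
  · exact absurd h hab
  · exact absurd (I.keyE_injective h) hne
  · exact h

/-- The entries preceding `e` in `PiRev` are exactly the larger ones. -/
theorem sum_prefix {P R : List (Elt I)} {e : Elt I} (h : I.PiRev = P ++ e :: R)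
    (f : Elt I → ℕ) :
    (P.map f).sum =
      ∑ e' ∈ Finset.univ.filter (fun e' => keyLt (I.keyE e) (I.keyE e')), f e' := by
  have hp := I.pairwise_PiRev
  have hn := I.nodup_PiRev
  rw [h, List.pairwise_append, List.pairwise_cons] at hp
  rw [h] at hn
  rw [← List.sum_toFinset f hn.of_append_left]
  refine Finset.sum_congr ?_ fun _ _ => rfl
  ext e'
  simp only [List.mem_toFinset, Finset.mem_filter, Finset.mem_univ, true_and]
  refine ⟨fun he' => hp.2.2 e' he' e (by simp), fun hlt => ?_⟩
  have hmem := I.mem_PiRev e'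
  rw [h, List.mem_append, List.mem_cons] at hmem
  rcases hmem with hm | rfl | hm
  · exact hm
  · exact absurd hlt (keyLt_irrefl _)
  · exact absurd (keyLt_trans hlt (hp.2.1.1 e' hm)) (keyLt_irrefl _)

/-- The level of `q_{s_{ij}}` when `e` is its only host: the lengths of the pieces of the entries
larger than `e`, added to the level inside the part of the tree starting at `e`. -/
theorem qdepths_of_host {Y : Finset (Fin I.m)} {C D : BT (TN I.m)} {i : Fin I.m} {j : Fin 3}
    (hC : TN.sleaf i j ∉ C.vals) (hD : I.IsReal Y C I.PiRev D) (e : Elt I)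
    (he : ∀ e', I.Hosts Y i j e' → e' = e) (a : ℕ)
    (ha : ∀ R D₀, I.IsReal Y C (e :: R) D₀ →
      (∀ D₁, I.IsReal Y C R D₁ → D₁.qdepths (TN.sleaf i j) = []) →
      D₀.qdepths (TN.sleaf i j) = [a]) :
    D.qdepths (TN.sleaf i j) = [a +
      ∑ e' ∈ Finset.univ.filter (fun e' => keyLt (I.keyE e) (I.keyE e')), I.pieceLen Y e'] := by
  obtain ⟨P, R, hPR⟩ := List.append_of_mem (I.mem_PiRev e)
  have hn := I.nodup_PiRev
  rw [hPR, List.nodup_append, List.nodup_cons] at hn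
  rw [hPR] at hD
  obtain ⟨D₀, h₀, hq⟩ := qdepths_prefix (i := i) (j := j) hD fun e' he' hh => by
    exact hn.2.2 e' he' e (by simp) (he e' hh)
  have hnil (D₁) (h₁ : I.IsReal Y C R D₁) : D₁.qdepths (TN.sleaf i j) = [] :=
    qdepths_eq_nil hC h₁ fun e' he' hh => by
      have := he e' hh
      subst this
      exact hn.2.1.1 he'
  rw [hq, ha R D₀ h₀ hnil, sum_prefix hPR]; rfl

/-! ### Counting the nodes above a host -/

theorem x_injective (i : Fin I.m) : Function.Injective (I.x i) := by
  have := I.hord i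
  intro a b h
  fin_cases a <;> fin_cases b <;> simp at h ⊢ <;> omega

theorem x_le (i : Fin I.m) (j : Fin 3) : I.x i j ≤ I.x i 2 := by
  have := I.hord i
  fin_cases j <;> simp <;> omega

/-- In an exact cover, every element has exactly one pending leaf. -/
theorem length_pending {Y : Finset (Fin I.m)} (hY : I.ExactCover Y) (u : Fin I.n) :
    (I.pending Y u).length = 1 := by
  obtain ⟨l, ⟨hl, κ, hκ⟩, huniq⟩ := hY u
  rw [pending, List.length_map, Finset.length_toList, Finset.card_eq_one]
  refine ⟨(l, κ), ?_⟩
  ext ⟨l', κ'⟩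
  simp only [Finset.mem_filter, Finset.mem_univ, true_and, Finset.mem_singleton, Prod.mk.injEq]
  constructor
  · rintro ⟨h1, h2⟩
    obtain rfl := huniq l' ⟨h1, κ', h2⟩
    exact ⟨rfl, x_injective l' (h2.trans hκ.symm)⟩
  · rintro ⟨rfl, rfl⟩
    exact ⟨hl, hκ⟩

/-- Removing `X_i` from `𝒴` does not change the pending leaves of elements larger than `X_i`. -/
theorem pending_erase (Y : Finset (Fin I.m)) {i : Fin I.m} {u : Fin I.n}
    (hu : keyLt (I.keyX i) (keyU u)) : I.pending (Y.erase i) u = I.pending Y u := by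
  have hne (κ : Fin 3) : I.x i κ ≠ u := by
    have := x_le i κ
    have := (I.hord i).1
    simp only [keyLt, keyX, keyU] at hu
    omega
  unfold pending
  congr 2
  ext ⟨l, κ⟩
  simp only [Finset.mem_filter, Finset.mem_univ, true_and, Finset.mem_erase]
  constructor
  · rintro ⟨⟨_, h⟩, h'⟩; exact ⟨h, h'⟩
  · rintro ⟨h, h'⟩
    refine ⟨⟨?_, h⟩, h'⟩
    rintro rfl
    exact hne κ h'

/-- If all elements above a key contribute one node each, the pieces above that key have total
length the number of elements plus five times the number of sets above it. -/
theorem sum_pieceLen (Y : Finset (Fin I.m)) (p : ℕ × ℕ × ℕ)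
    (h : ∀ u : Fin I.n, keyLt p (keyU u) → (I.pending Y u).length = 1) :
    ∑ e ∈ Finset.univ.filter (fun e => keyLt p (I.keyE e)), I.pieceLen Y e =
      (Finset.univ.filter (fun u : Fin I.n => keyLt p (keyU u))).card +
        5 * (Finset.univ.filter (fun l : Fin I.m => keyLt p (I.keyX l))).card := by
  rw [Finset.sum_filter, Fintype.sum_sum_type, ← Finset.sum_filter, ← Finset.sum_filter]
  congr 1
  · rw [Finset.card_eq_sum_ones]
    refine Finset.sum_congr rfl fun u hu => h u ?_
    simpa [keyE] using hu
  · simp only [pieceLen, Finset.sum_const, smul_eq_mul, mul_comm]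
    rfl

theorem keyLt_keyU_keyX (i : Fin I.m) (j : Fin 3) : keyLt (keyU (I.x i j)) (I.keyX i) := by
  have := x_le i j
  have := (I.hord i).1
  simp only [keyLt, keyX, keyU]
  omega

theorem card_elems (i : Fin I.m) (j : Fin 3) :
    (Finset.univ.filter (fun u : Fin I.n => keyLt (keyU (I.x i j)) (keyU u))).card =
      I.elemsBetween i j +
        (Finset.univ.filter (fun u : Fin I.n => keyLt (I.keyX i) (keyU u))).card := by
  rw [elemsBetween, ← Finset.card_union_of_disjoint]
  · congr 1
    ext u
    simp only [Finset.mem_filter, Finset.mem_univ, true_and, Finset.mem_union, keyLt_keyU]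
    constructor
    · intro h
      rcases keyLt_trichotomy (keyU u) (I.keyX i) with h' | h' | h'
      · exact .inl ⟨h, h'⟩
      · exact absurd (I.keyE_injective (a₁ := .inl u) (a₂ := .inr i) h') (by simp)
      · exact .inr h'
    · rintro (h | h)
      · exact h.1
      · exact keyLt_keyU.1 (keyLt_trans (keyLt_keyU_keyX i j) h)
  · rw [Finset.disjoint_filter]
    exact fun u _ h h' => keyLt_irrefl _ (keyLt_trans h.2 h')

theorem card_sets (i : Fin I.m) (j : Fin 3) :
    (Finset.univ.filter (fun l : Fin I.m => keyLt (keyU (I.x i j)) (I.keyX l))).card =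
      I.setsBetween i j +
        (Finset.univ.filter (fun l : Fin I.m => keyLt (I.keyX i) (I.keyX l))).card := by
  rw [setsBetween, ← Finset.card_union_of_disjoint]
  · congr 1
    ext l
    simp only [Finset.mem_filter, Finset.mem_univ, true_and, Finset.mem_union]
    have := fun h => keyLt_trans (keyLt_keyU_keyX i j) (r := I.keyX l) h
    by_cases h : keyLt (I.keyX i) (I.keyX l) <;> simp [h, this]
  · rw [Finset.disjoint_filter]
    exact fun l _ h h' => h.2 h'

end Inst

end X3C

/-- Let `𝒴 ⊆ 𝒳` be an exact cover of `U` and `X_i ∈ 𝒴`.  Let `D` be a realization of `Π`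
w.r.t. `𝒴` and `D'` a realization of `Π` w.r.t. `𝒴 ∖ {X_i}` (with completions not
mentioning the `s`-leaves of `X_i`).  Then for each `j ∈ {1,2,3}` the level of the query
node `q_{s_{ij}}` in `D` minus its level in `D'` equals `γ(i,j)`. -/
theorem statement10 (I : X3C.Inst) (Y : Finset (Fin I.m)) (hY : I.ExactCover Y)
    (i : Fin I.m) (hi : i ∈ Y)
    (C C' D D' : BT (X3C.TN I.m))
    (hC : ∀ j : Fin 3, X3C.TN.sleaf i j ∉ C.vals)
    (hC' : ∀ j : Fin 3, X3C.TN.sleaf i j ∉ C'.vals)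
    (hD : I.IsReal Y C I.PiRev D)
    (hD' : I.IsReal (Y.erase i) C' I.PiRev D') :
    ∀ j : Fin 3, ∃ d d' : ℕ,
      D.qdepths (X3C.TN.sleaf i j) = [d] ∧
      D'.qdepths (X3C.TN.sleaf i j) = [d'] ∧
      (d : ℤ) - (d' : ℤ) = I.gam i j := by
  intro j
  have hlt : I.x i j < I.n := (X3C.Inst.x_le i j).trans_lt (I.hbound i)
  -- In `D` the only host is the element `u_{ij}`, and its piece is the single query.
  have hd := X3C.Inst.qdepths_of_host (hC j) hD (Sum.inl ⟨I.x i j, hlt⟩)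
    (by
      rintro (u | l) h
      · exact congrArg Sum.inl (Fin.ext h.2.symm)
      · exact absurd hi h.2)
    0
    (by
      intro R D₀ h hnil
      cases h with
      | elem _ _ D₁ L hL h =>
        have hlen := hL.length_eq.trans (X3C.Inst.length_pending hY _)
        have hmem := hL.mem_iff.2 (X3C.Inst.mem_pending.2 ⟨hi, rfl⟩)
        obtain ⟨v, rfl⟩ := List.length_eq_one_iff.1 hlen
        obtain rfl := List.mem_singleton.1 hmem
        simp [X3C.seqT, BT.qdepths, hnil D₁ h])
  -- In `D'` the only host is `X_i`, in `A`-configuration.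
  have hd' := X3C.Inst.qdepths_of_host (hC' j) hD' (Sum.inr i)
    (by
      rintro (u | l) h
      · exact absurd h.1 (Finset.notMem_erase i Y)
      · exact congrArg Sum.inr h.1)
    (4 - j)
    (by
      intro R D₀ h hnil
      cases h with
      | setB _ _ _ _ h => exact absurd h (Finset.notMem_erase i Y)
      | setA _ _ D₁ La _ hLa h =>
        rw [BT.qdepths, X3C.qdepths_seqT La _ _ (X3C.Inst.sleaf_notMem_aleaves i j hLa),
          hnil D₁ h]
        fin_cases j <;> simp [X3C.seqT, BT.qdepths])
  have hs := X3C.Inst.sum_pieceLen Y (X3C.keyU (I.x i j))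
    fun u _ => X3C.Inst.length_pending hY u
  have hs' := X3C.Inst.sum_pieceLen (Y.erase i) (I.keyX i) fun u hu => by
    rw [X3C.Inst.pending_erase Y hu]; exact X3C.Inst.length_pending hY u
  rw [X3C.Inst.card_elems, X3C.Inst.card_sets] at hs
  refine ⟨_, _, hd.trans (congrArg (fun k => [0 + k]) hs),
    hd'.trans (congrArg (fun k => [4 - (j : ℕ) + k]) hs'), ?_⟩
  simp only [X3C.Inst.gam]
  have := j.isLt
  omega
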